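/- arXiv:1108.5415 — 2 statements merged into one kernel-verified Lean document; each statement's English description precedes it below -/
import Mathlib

section
/- Let C > 0 and let (g_s, r_s), s = 1, 2, …, be i.i.d. pairs chosen uniformly at random from G × R. Let τ be the smallest t such that the graph with vertex set G and edge set {{g_s, g_s r_s} : 1 ≤ s ≤ t} is connected. Then for every integer t > 8(C+3)·log(n)/γ̂, P[τ > t] ≤ 2·n^{−C}. -/
open MeasureTheory

noncomputable section

/-- Uniform probability measure on a finset. -/
def unifOn {α : Type*} [MeasurableSpace α] (s : Finset α) : Measure α :=
  (s.card : ENNReal)⁻¹ • ∑ a ∈ s, Measure.dirac a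

/-- Total variation distance between two measures. -/
def tvDist {α : Type*} [MeasurableSpace α] (μ ν : Measure α) : ℝ :=
  ⨆ A : {A : Set α // MeasurableSet A}, ((μ A).toReal - (ν A).toReal)

variable (G : Type*) [Group G] [Fintype G] [DecidableEq G] [MeasurableSpace G]
  [DiscreteMeasurableSpace G]

/-- The simplex of probability vectors indexed by `G`. -/
def simplexG : Set (G → ℝ) := {x | (∀ g, 0 ≤ x g) ∧ ∑ g, x g = 1}

/-- The uniform (normalized `(n-1)`-dimensional Hausdorff) measure on the simplex. -/
def UG : Measure (G → ℝ) :=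
  (μH[(Fintype.card G : ℝ) - 1] (simplexG G))⁻¹ •
    (μH[(Fintype.card G : ℝ) - 1]).restrict (simplexG G)

/-- One step of the Gibbs sampler on the simplex from update datum `(g, r, λ)`. -/
def gibbsStepG (x : G → ℝ) (u : G × G × ℝ) : G → ℝ := fun h =>
  if h = u.1 then u.2.2 * (x u.1 + x (u.1 * u.2.1))
  else if h = u.1 * u.2.1 then (1 - u.2.2) * (x u.1 + x (u.1 * u.2.1))
  else x h

/-- Law of the random update datum: `g` uniform on `G`, `r` uniform on `R`,
`λ` uniform on `[0,1]`. -/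
def driveG (R : Finset G) : Measure (G × G × ℝ) :=
  (unifOn (Finset.univ : Finset G)).prod
    ((unifOn R).prod ((volume : Measure ℝ).restrict (Set.Icc 0 1)))

/-- Law of the Gibbs sampler after `T` steps started at `x`. -/
def lawG (R : Finset G) (x : G → ℝ) (T : ℕ) : Measure (G → ℝ) :=
  Measure.map (fun ω : Fin T → G × G × ℝ => (List.ofFn ω).foldl (gibbsStepG G) x)
    (Measure.pi fun _ => driveG G R)

/-- The transition matrix of the slowed simple random walk on `G`. -/
def KhatM (R : Finset G) : G → G → ℝ := fun z w =>
  if z = w then 1 - 2 / (Fintype.card G : ℝ)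
  else if z⁻¹ * w ∈ R then 2 / ((Fintype.card G : ℝ) * R.card) else 0

/-- The spectral gap `γ̂ = 1 - λ̂₂` of `K̂`, with the second-largest eigenvalue
expressed by the variational (Courant–Fischer) characterization. -/
def gapHat (R : Finset G) : ℝ :=
  1 - sSup {lam : ℝ | ∃ v : G → ℝ, ∑ g, v g = 0 ∧ ∑ g, (v g) ^ 2 = 1 ∧
    lam = ∑ g, ∑ h, v g * KhatM G R g h * v h}


/-! The edge `{g, g * r}` of a uniform pair `(g, r)` leaves a set `A` with probability equal to the
Dirichlet form of the indicator of `A`, which the spectral gap bounds below by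
`γ̂ * |A| * (n - |A|) / n`. A disconnected graph has a nonempty set `A` with `|A| ≤ n / 2` that no
edge leaves, and for fixed `A` this happens in `t` independent draws with probability at most
`x ^ |A|`, where `x = exp (-γ̂ * t / 2)`. Summing over all nonempty `A` gives `(1 + x) ^ n - 1`,
which is at most `2 * n * x` when `n * x ≤ 1`; otherwise `2 * n * x` exceeds `1` anyway. -/

open Finset

section RandomGraph

variable {ι V Ω : Type*}

lemma one_add_pow_sub_one_le (n : ℕ) {x : ℝ} (hx : 0 ≤ x) (hnx : n * x ≤ 1) :
    (1 + x) ^ n - 1 ≤ 2 * (n * x) := by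
  have hnx₀ : 0 ≤ n * x := by positivity
  have hpow : (1 + x) ^ n ≤ Real.exp (n * x) := by
    rw [Real.exp_nat_mul, add_comm]
    gcongr
    exact Real.add_one_le_exp x
  have hexp := Real.abs_exp_sub_one_le (by rwa [abs_of_nonneg hnx₀])
  rw [abs_of_nonneg hnx₀] at hexp
  linarith [le_abs_self (Real.exp (n * x) - 1)]

lemma sum_nonempty_pow_card [Fintype V] (x : ℝ) :
    ∑ A : Finset V with A.Nonempty, x ^ #A = (1 + x) ^ Fintype.card V - 1 := by
  classical
  have hall : ∑ A : Finset V, x ^ #A = (1 + x) ^ Fintype.card V := by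
    simpa [add_comm] using Fintype.sum_pow_mul_eq_add_pow V x 1
  have herase : ({A | A.Nonempty} : Finset (Finset V)) = univ.erase ∅ := by
    ext A
    simp [nonempty_iff_ne_empty]
  rw [herase, sum_erase_eq_sub (mem_univ ∅), hall, card_empty, pow_zero]

/-- The graph on `V` whose edges are the pairs `{src s, tgt s}`, with loops discarded. -/
def edgeGraph (src tgt : ι → V) : SimpleGraph V :=
  SimpleGraph.fromRel fun a b => ∃ s, src s = a ∧ tgt s = b

/-- The event that the edge `{src p, tgt p}` has exactly one endpoint in `A`. -/
def cutEvent (src tgt : Ω → V) (A : Finset V) : Set Ω :=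
  {p | ¬ (src p ∈ A ↔ tgt p ∈ A)}

lemma edgeGraph_reachable (src tgt : ι → V) (s : ι) :
    (edgeGraph src tgt).Reachable (src s) (tgt s) := by
  by_cases h : src s = tgt s
  · rw [h]
  · exact SimpleGraph.Adj.reachable ⟨h, Or.inl ⟨s, rfl, rfl⟩⟩

lemma exists_card_le_half_of_not_connected [Fintype V] [Nonempty V] {H : SimpleGraph V}
    (hH : ¬ H.Connected) :
    ∃ A : Finset V, A.Nonempty ∧ 2 * #A ≤ Fintype.card V ∧
      ∀ a b, H.Reachable a b → (a ∈ A ↔ b ∈ A) := by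
  classical
  obtain ⟨u, w, huw⟩ : ∃ u w, ¬ H.Reachable u w := by
    by_contra! hreach
    exact hH ⟨hreach⟩
  let A : Finset V := {x | H.Reachable u x}
  have hA (a b) (hab : H.Reachable a b) : a ∈ A ↔ b ∈ A := by
    simpa [A] using ⟨fun h => h.trans hab, fun h => h.trans hab.symm⟩
  by_cases hcard : 2 * #A ≤ Fintype.card V
  · exact ⟨A, ⟨u, by simp [A]⟩, hcard, hA⟩
  · refine ⟨Aᶜ, ⟨w, by simpa [A] using huw⟩, by rw [card_compl]; omega, fun a b hab => ?_⟩
    simpa only [mem_compl] using not_congr (hA a b hab)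

lemma exists_forall_notMem_cutEvent [Fintype V] [Nonempty V] {src tgt : Ω → V} {ω : ι → Ω}
    (hω : ¬ (edgeGraph (src ∘ ω) (tgt ∘ ω)).Connected) :
    ∃ A : Finset V, A.Nonempty ∧ 2 * #A ≤ Fintype.card V ∧ ∀ s, ω s ∉ cutEvent src tgt A := by
  obtain ⟨A, hne, hcard, hA⟩ := exists_card_le_half_of_not_connected hω
  exact ⟨A, hne, hcard, fun s => not_not_intro (hA _ _ (edgeGraph_reachable _ _ s))⟩

variable [Fintype ι] [MeasurableSpace Ω] (μ : Measure Ω) [IsProbabilityMeasure μ]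

lemma measureReal_pi_forall_notMem_le_exp {S : Set Ω} (hS : MeasurableSet S) {p : ℝ}
    (hp : p ≤ μ.real S) :
    (Measure.pi fun _ : ι => μ).real {ω | ∀ s, ω s ∉ S} ≤ Real.exp (-p) ^ Fintype.card ι := by
  have hpi : {ω : ι → Ω | ∀ s, ω s ∉ S} = Set.univ.pi fun _ => Sᶜ := by
    ext ω
    simp
  have hprod : (Measure.pi fun _ : ι => μ).real {ω | ∀ s, ω s ∉ S} =
      μ.real Sᶜ ^ Fintype.card ι := by
    simp [hpi, Measure.real, Measure.pi_pi]
  have hcompl : μ.real Sᶜ ≤ Real.exp (-p) := by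
    rw [probReal_compl_eq_one_sub hS]
    linarith [Real.one_sub_le_exp_neg p]
  rw [hprod]
  gcongr

variable [MeasurableSpace V] [DiscreteMeasurableSpace V]

lemma measurableSet_cutEvent {src tgt : Ω → V} (hsrc : Measurable src) (htgt : Measurable tgt)
    (A : Finset V) : MeasurableSet (cutEvent src tgt A) := by
  have hA : MeasurableSet (A : Set V) := .of_discrete
  exact (hsrc hA).iff (htgt hA) |>.compl

theorem measureReal_not_connected_edgeGraph_le [Fintype V] [Nonempty V] {src tgt : Ω → V}
    (hsrc : Measurable src) (htgt : Measurable tgt) {κ : ℝ}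
    (hκ : ∀ A : Finset V, 2 * #A ≤ Fintype.card V → κ * #A ≤ μ.real (cutEvent src tgt A)) :
    (Measure.pi fun _ : ι => μ).real {ω | ¬ (edgeGraph (src ∘ ω) (tgt ∘ ω)).Connected} ≤
      2 * (Fintype.card V * Real.exp (-(κ * Fintype.card ι))) := by
  set x : ℝ := Real.exp (-(κ * Fintype.card ι)) with hx
  obtain hnx | hnx := le_or_gt (Fintype.card V * x) 1
  swap
  · exact measureReal_le_one.trans (by linarith)
  have hcut (A : Finset V) (hA : 2 * #A ≤ Fintype.card V) :
      (Measure.pi fun _ : ι => μ).real {ω | ∀ s, ω s ∉ cutEvent src tgt A} ≤ x ^ #A := by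
    refine (measureReal_pi_forall_notMem_le_exp μ (measurableSet_cutEvent hsrc htgt A)
      (hκ A hA)).trans_eq ?_
    rw [hx, ← Real.exp_nat_mul, ← Real.exp_nat_mul]
    ring_nf
  calc (Measure.pi fun _ : ι => μ).real {ω | ¬ (edgeGraph (src ∘ ω) (tgt ∘ ω)).Connected}
      ≤ (Measure.pi fun _ : ι => μ).real
          (⋃ A ∈ ({A | A.Nonempty ∧ 2 * #A ≤ Fintype.card V} : Finset (Finset V)),
            {ω | ∀ s, ω s ∉ cutEvent src tgt A}) := by
        refine measureReal_mono (fun ω hω => ?_) (measure_ne_top _ _)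
        obtain ⟨A, hne, hcard, hA⟩ := exists_forall_notMem_cutEvent hω
        exact Set.mem_biUnion (by simp [hne, hcard]) hA
    _ ≤ ∑ A : Finset V with A.Nonempty ∧ 2 * #A ≤ Fintype.card V,
          (Measure.pi fun _ : ι => μ).real {ω | ∀ s, ω s ∉ cutEvent src tgt A} :=
        measureReal_biUnion_finset_le _ _
    _ ≤ ∑ A : Finset V with A.Nonempty ∧ 2 * #A ≤ Fintype.card V, x ^ #A :=
        sum_le_sum fun A hA => hcut A (mem_filter.mp hA).2.2
    _ ≤ ∑ A : Finset V with A.Nonempty, x ^ #A :=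
        sum_le_sum_of_subset_of_nonneg (monotone_filter_right _ fun _ _ h => h.1)
          fun _ _ _ => by positivity
    _ = (1 + x) ^ Fintype.card V - 1 := sum_nonempty_pow_card x
    _ ≤ 2 * (Fintype.card V * x) := one_add_pow_sub_one_le _ (Real.exp_pos _).le hnx

end RandomGraph

section RayleighQuotient

variable {V : Type*} [Fintype V] (M : V → V → ℝ)

/-- The values of the quadratic form of `M` at the unit vectors orthogonal to the constants. For
symmetric stochastic `M` the supremum of this set is the second largest eigenvalue. -/
def rayleighSet : Set ℝ :=
  {lam | ∃ v : V → ℝ, ∑ g, v g = 0 ∧ ∑ g, v g ^ 2 = 1 ∧ lam = ∑ g, ∑ h, v g * M g h * v h}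

lemma isCompact_rayleighSet : IsCompact (rayleighSet M) := by
  have hsphere : IsCompact {v : V → ℝ | ∑ g, v g = 0 ∧ ∑ g, v g ^ 2 = 1} := by
    have hcube : IsCompact (Set.univ.pi fun _ : V => Set.Icc (-1 : ℝ) 1) :=
      isCompact_univ_pi fun _ => isCompact_Icc
    refine hcube.of_isClosed_subset ((isClosed_eq (by fun_prop) (by fun_prop)).inter
      (isClosed_eq (by fun_prop) (by fun_prop))) ?_
    rintro v ⟨-, hv⟩ g -
    have hg : v g ^ 2 ≤ 1 :=
      hv ▸ single_le_sum (f := fun g => v g ^ 2) (fun _ _ => sq_nonneg _) (mem_univ g)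
    exact abs_le.mp ((sq_le_one_iff_abs_le_one _).mp hg)
  have himage : rayleighSet M =
      (fun v : V → ℝ => ∑ g, ∑ h, v g * M g h * v h) ''
        {v | ∑ g, v g = 0 ∧ ∑ g, v g ^ 2 = 1} := by
    ext lam
    simp only [rayleighSet, Set.mem_ofPred_eq, Set.mem_image, and_assoc, eq_comm (a := lam)]
  rw [himage]
  exact hsphere.image (by fun_prop)

variable {M} in
lemma quadraticForm_div_sum_sq_mem_rayleighSet {v : V → ℝ} (hv : ∑ g, v g = 0)
    (hpos : 0 < ∑ g, v g ^ 2) :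
    (∑ g, ∑ h, v g * M g h * v h) / ∑ g, v g ^ 2 ∈ rayleighSet M := by
  refine ⟨fun g => v g / √(∑ g, v g ^ 2), ?_, ?_, ?_⟩
  · rw [← sum_div, hv, zero_div]
  · simp_rw [div_pow, Real.sq_sqrt hpos.le, ← sum_div, div_self hpos.ne']
  · simp_rw [div_mul_eq_mul_div, mul_div_assoc', div_div, Real.mul_self_sqrt hpos.le, ← sum_div]

lemma rayleighSet_nonempty [Nontrivial V] : (rayleighSet M).Nonempty := by
  classical
  obtain ⟨a, b, hab⟩ := exists_pair_ne V
  let v : V → ℝ := Pi.single a 1 - Pi.single b 1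
  have hsum : ∑ g, v g = 0 := by simp [v]
  have ha : v a = 1 := by simp [v, hab]
  have hpos : 0 < ∑ g, v g ^ 2 :=
    sum_pos' (fun _ _ => sq_nonneg _) ⟨a, mem_univ a, by simp [ha]⟩
  exact ⟨_, quadraticForm_div_sum_sq_mem_rayleighSet hsum hpos⟩

lemma quadraticForm_le_sSup_rayleighSet_mul {v : V → ℝ} (hv : ∑ g, v g = 0) :
    ∑ g, ∑ h, v g * M g h * v h ≤ sSup (rayleighSet M) * ∑ g, v g ^ 2 := by
  have hnonneg : 0 ≤ ∑ g, v g ^ 2 := sum_nonneg fun _ _ => sq_nonneg _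
  obtain hzero | hpos := hnonneg.eq_or_lt
  · have hv₀ (g : V) : v g = 0 := by
      simpa using (sum_eq_zero_iff_of_nonneg fun _ _ => sq_nonneg _).mp hzero.symm g (mem_univ g)
    simp [hv₀]
  · rw [← div_le_iff₀ hpos]
    exact le_csSup (isCompact_rayleighSet M).bddAbove
      (quadraticForm_div_sum_sq_mem_rayleighSet hv hpos)

end RayleighQuotient

section DirichletForm

variable {Γ : Type*} [Group Γ]

lemma eq_of_forall_mul_right_eq {α : Type*} {S : Set Γ} (hS : Subgroup.closure S = ⊤) {v : Γ → α}
    (hv : ∀ g, ∀ r ∈ S, v (g * r) = v g) (g : Γ) : v g = v 1 := by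
  have hg : g ∈ Subgroup.closure S := hS ▸ Subgroup.mem_top g
  induction hg using Subgroup.closure_induction_right with
  | one => rfl
  | mul_right x _ r hr ih => rw [hv x r hr, ih]
  | mul_inv_cancel x _ r hr ih => rw [← hv (x * r⁻¹) r hr, inv_mul_cancel_right, ih]

variable [Fintype Γ] (R : Finset Γ)

/-- The mean of `(v g - v (g * r)) ^ 2` over `g : Γ` and `r ∈ R`, which for symmetric `R` is the
Dirichlet form of the slowed simple random walk with respect to counting measure. -/
def dirichletForm (v : Γ → ℝ) : ℝ :=
  (∑ g, ∑ r ∈ R, (v g - v (g * r)) ^ 2) / (Fintype.card Γ * #R)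

variable {R}

lemma dirichletForm_nonneg (v : Γ → ℝ) : 0 ≤ dirichletForm R v := by
  unfold dirichletForm
  positivity

lemma dirichletForm_pos (hne : R.Nonempty) (hgen : Subgroup.closure (R : Set Γ) = ⊤) {v : Γ → ℝ}
    {a : Γ} (ha : v a ≠ v 1) : 0 < dirichletForm R v := by
  obtain ⟨g, r, hr, hgr⟩ : ∃ g, ∃ r ∈ R, v (g * r) ≠ v g := by
    by_contra! hv
    exact ha (eq_of_forall_mul_right_eq hgen hv a)
  have hnonneg (g : Γ) : 0 ≤ ∑ r ∈ R, (v g - v (g * r)) ^ 2 := sum_nonneg fun _ _ => sq_nonneg _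
  have hg : 0 < ∑ r ∈ R, (v g - v (g * r)) ^ 2 :=
    sum_pos' (fun _ _ => sq_nonneg _) ⟨r, hr, by have := sub_ne_zero.mpr hgr.symm; positivity⟩
  have hcard : (0 : ℝ) < #R := mod_cast hne.card_pos
  have hn : (0 : ℝ) < Fintype.card Γ := mod_cast Fintype.card_pos
  exact div_pos (sum_pos' (fun g _ => hnonneg g) ⟨g, mem_univ g, hg⟩) (mul_pos hn hcard)

lemma dirichletForm_sub_const (v : Γ → ℝ) (c : ℝ) :
    dirichletForm R (fun g => v g - c) = dirichletForm R v := by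
  simp [dirichletForm]

lemma dirichletForm_eq_sum_mul (hne : R.Nonempty) (v : Γ → ℝ) :
    dirichletForm R v =
      2 / Fintype.card Γ * ∑ g, v g ^ 2 -
        2 / (Fintype.card Γ * #R) * ∑ g, ∑ r ∈ R, v g * v (g * r) := by
  have hcard : (#R : ℝ) ≠ 0 := mod_cast hne.card_ne_zero
  have htranslate : ∑ g, ∑ r ∈ R, v (g * r) ^ 2 = #R * ∑ g, v g ^ 2 := by
    have hr (r : Γ) : ∑ g, v (g * r) ^ 2 = ∑ g, v g ^ 2 :=
      Equiv.sum_comp (Equiv.mulRight r) fun g => v g ^ 2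
    rw [sum_comm]
    simp [hr]
  have hsq : ∑ g, ∑ r ∈ R, (v g - v (g * r)) ^ 2 =
      2 * #R * ∑ g, v g ^ 2 - 2 * ∑ g, ∑ r ∈ R, v g * v (g * r) := by
    simp only [sub_sq, sum_add_distrib, sum_sub_distrib, htranslate, sum_const, nsmul_eq_mul,
      ← mul_sum, mul_assoc]
    ring
  rw [dirichletForm, hsq]
  field_simp

end DirichletForm

section SpectralGap

variable {Γ : Type*} [Group Γ] [Fintype Γ] [DecidableEq Γ] {R : Finset Γ}

lemma KhatM_mul_right (hid : 1 ∉ R) (g x : Γ) :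
    KhatM Γ R g (g * x) =
      (if x = 1 then 1 - 2 / (Fintype.card Γ : ℝ) else 0) +
        if x ∈ R then 2 / ((Fintype.card Γ : ℝ) * #R) else 0 := by
  by_cases hx : x = 1 <;> simp [KhatM, hx, hid]

lemma sum_mul_KhatM_mul (hid : 1 ∉ R) (v : Γ → ℝ) (g : Γ) :
    ∑ h, v g * KhatM Γ R g h * v h =
      (1 - 2 / (Fintype.card Γ : ℝ)) * v g ^ 2 +
        2 / ((Fintype.card Γ : ℝ) * #R) * ∑ r ∈ R, v g * v (g * r) := by
  rw [← Equiv.sum_comp (Equiv.mulLeft g)]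
  simp only [Equiv.coe_mulLeft, KhatM_mul_right hid, mul_add, add_mul, sum_add_distrib, mul_ite,
    ite_mul, mul_zero, zero_mul, sum_ite_eq', sum_ite_mem, univ_inter, mem_univ, if_true, mul_one,
    mul_sum]
  congr 1
  · ring
  · exact sum_congr rfl fun r _ => by ring

lemma sum_sq_sub_quadraticForm_KhatM (hid : 1 ∉ R) (hne : R.Nonempty) (v : Γ → ℝ) :
    ∑ g, v g ^ 2 - ∑ g, ∑ h, v g * KhatM Γ R g h * v h = dirichletForm R v := by
  simp only [sum_mul_KhatM_mul hid, sum_add_distrib, ← mul_sum, dirichletForm_eq_sum_mul hne]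
  ring

variable (R) in
lemma gapHat_eq_one_sub_sSup : gapHat Γ R = 1 - sSup (rayleighSet (KhatM Γ R)) := rfl

lemma exists_gapHat_eq_dirichletForm (hid : 1 ∉ R) (hne : R.Nonempty) :
    ∃ v : Γ → ℝ, ∑ g, v g = 0 ∧ ∑ g, v g ^ 2 = 1 ∧ gapHat Γ R = dirichletForm R v := by
  obtain ⟨r, hr⟩ := hne
  have : Nontrivial Γ := ⟨r, 1, ne_of_mem_of_not_mem hr hid⟩
  obtain ⟨v, hsum, hnorm, hsup⟩ :=
    (isCompact_rayleighSet (KhatM Γ R)).sSup_mem (rayleighSet_nonempty _)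
  refine ⟨v, hsum, hnorm, ?_⟩
  rw [gapHat_eq_one_sub_sSup, hsup, ← hnorm, sum_sq_sub_quadraticForm_KhatM hid ⟨r, hr⟩]

lemma gapHat_nonneg (hid : 1 ∉ R) (hne : R.Nonempty) : 0 ≤ gapHat Γ R := by
  obtain ⟨v, -, -, hv⟩ := exists_gapHat_eq_dirichletForm hid hne
  exact hv ▸ dirichletForm_nonneg v

lemma gapHat_pos (hid : 1 ∉ R) (hne : R.Nonempty) (hgen : Subgroup.closure (R : Set Γ) = ⊤) :
    0 < gapHat Γ R := by
  obtain ⟨v, hsum, hnorm, hgap⟩ := exists_gapHat_eq_dirichletForm hid hne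
  obtain ⟨a, ha⟩ : ∃ a, v a ≠ v 1 := by
    by_contra! hconst
    have hv (g : Γ) : v g = 0 := by
      rw [hconst]
      simpa [hconst] using hsum
    simp [hv] at hnorm
  exact hgap ▸ dirichletForm_pos hne hgen ha

lemma gapHat_mul_sum_sq_le_dirichletForm (hid : 1 ∉ R) (hne : R.Nonempty) {v : Γ → ℝ}
    (hv : ∑ g, v g = 0) : gapHat Γ R * ∑ g, v g ^ 2 ≤ dirichletForm R v := by
  rw [gapHat_eq_one_sub_sSup, ← sum_sq_sub_quadraticForm_KhatM hid hne]
  linarith [quadraticForm_le_sSup_rayleighSet_mul (KhatM Γ R) hv]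

lemma gapHat_mul_card_mul_le_dirichletForm (hid : 1 ∉ R) (hne : R.Nonempty) (A : Finset Γ) :
    gapHat Γ R * (#A * (Fintype.card Γ - #A) / Fintype.card Γ) ≤
      dirichletForm R fun g => if g ∈ A then 1 else 0 := by
  have hn : (Fintype.card Γ : ℝ) ≠ 0 := mod_cast Fintype.card_ne_zero
  have hmean : ∑ g : Γ, ((if g ∈ A then (1 : ℝ) else 0) - #A / Fintype.card Γ) = 0 := by
    simp [mul_div_cancel₀, hn]
  have hvar : ∑ g : Γ, ((if g ∈ A then (1 : ℝ) else 0) - #A / Fintype.card Γ) ^ 2 =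
      #A * (Fintype.card Γ - #A) / Fintype.card Γ := by
    simp only [sub_sq, ite_pow, one_pow, mul_ite, ite_mul, mul_one, mul_zero, zero_mul, ne_eq,
      OfNat.ofNat_ne_zero, not_false_eq_true, zero_pow, sum_add_distrib, sum_sub_distrib,
      sum_ite_mem, univ_inter, sum_const, nsmul_eq_mul, card_univ]
    field_simp
    ring
  rw [← hvar, ← dirichletForm_sub_const _ (#A / Fintype.card Γ : ℝ)]
  exact gapHat_mul_sum_sq_le_dirichletForm hid hne hmean

lemma half_gapHat_mul_card_le_dirichletForm (hid : 1 ∉ R) (hne : R.Nonempty) {A : Finset Γ}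
    (hA : 2 * #A ≤ Fintype.card Γ) :
    gapHat Γ R / 2 * #A ≤ dirichletForm R fun g => if g ∈ A then 1 else 0 := by
  refine le_trans ?_ (gapHat_mul_card_mul_le_dirichletForm hid hne A)
  have hA' : (2 : ℝ) * #A ≤ Fintype.card Γ := mod_cast hA
  have hn : (0 : ℝ) < Fintype.card Γ := mod_cast Fintype.card_pos
  rw [div_mul_eq_mul_div, mul_div_assoc]
  refine mul_le_mul_of_nonneg_left ?_ (gapHat_nonneg hid hne)
  rw [div_le_div_iff₀ two_pos hn]
  nlinarith [Nat.cast_nonneg (α := ℝ) #A]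

end SpectralGap

section UniformMeasure

variable {α β : Type*} [MeasurableSpace α] [MeasurableSpace β] {s : Finset α} {t : Finset β}

lemma isProbabilityMeasure_unifOn (hs : s.Nonempty) : IsProbabilityMeasure (unifOn s) :=
  ⟨by simp [unifOn, ENNReal.inv_mul_cancel, hs.ne_empty]⟩

lemma unifOn_apply (s : Finset α) {S : Set α} [DecidablePred (· ∈ S)] (hS : MeasurableSet S) :
    unifOn s S = #{a ∈ s | a ∈ S} / #s := by
  simp [unifOn, Measure.dirac_apply' _ hS, Set.indicator_apply, ENNReal.div_eq_inv_mul]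

lemma unifOn_prod_unifOn (hs : s.Nonempty) (ht : t.Nonempty) :
    (unifOn s).prod (unifOn t) = unifOn (s ×ˢ t) := by
  have := isProbabilityMeasure_unifOn hs
  have := isProbabilityMeasure_unifOn ht
  refine Measure.prod_eq fun S T hS hT => ?_
  classical
  rw [unifOn_apply _ (hS.prod hT), unifOn_apply _ hS, unifOn_apply _ hT]
  simp only [Set.mem_prod, filter_product, card_product, Nat.cast_mul]
  exact ENNReal.mul_div_mul_comm (by simp) (by simp)

end UniformMeasure

section CayleyEdges

variable {Γ : Type*} [Group Γ] [Fintype Γ] [DecidableEq Γ] [MeasurableSpace Γ]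
  [DiscreteMeasurableSpace Γ] {R : Finset Γ}

lemma measureReal_cutEvent_mul (hne : R.Nonempty) (A : Finset Γ) :
    ((unifOn (univ : Finset Γ)).prod (unifOn R)).real
        (cutEvent Prod.fst (fun p => p.1 * p.2) A) =
      dirichletForm R fun g => if g ∈ A then 1 else 0 := by
  classical
  have hcross (g r : Γ) : ((if g ∈ A then 1 else 0) - if g * r ∈ A then 1 else 0 : ℝ) ^ 2 =
      if (g, r) ∈ cutEvent Prod.fst (fun p => p.1 * p.2) A then 1 else 0 := by
    by_cases hg : g ∈ A <;> by_cases hgr : g * r ∈ A <;> simp [cutEvent, hg, hgr]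
  rw [unifOn_prod_unifOn univ_nonempty hne, Measure.real, unifOn_apply _ .of_discrete,
    ENNReal.toReal_div, ENNReal.toReal_natCast, ENNReal.toReal_natCast, ← sum_boole, sum_product]
  simp only [dirichletForm, hcross, card_product, card_univ, Nat.cast_mul]

theorem measureReal_not_connected_cayley_le (hid : 1 ∉ R) (hne : R.Nonempty) (t : ℕ) :
    (Measure.pi fun _ : Fin t => (unifOn (univ : Finset Γ)).prod (unifOn R)).real
        {ω | ¬ (SimpleGraph.fromRel fun a b =>
            ∃ s, (ω s).1 = a ∧ (ω s).1 * (ω s).2 = b).Connected} ≤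
      2 * (Fintype.card Γ * Real.exp (-(gapHat Γ R / 2 * t))) := by
  have := isProbabilityMeasure_unifOn (univ_nonempty (α := Γ))
  have := isProbabilityMeasure_unifOn hne
  have hcut (A : Finset Γ) (hA : 2 * #A ≤ Fintype.card Γ) :=
    (half_gapHat_mul_card_le_dirichletForm hid hne hA).trans_eq
      (measureReal_cutEvent_mul hne A).symm
  simpa only [edgeGraph, Function.comp_apply, Fintype.card_fin] using
    measureReal_not_connected_edgeGraph_le (ι := Fin t)
      ((unifOn (univ : Finset Γ)).prod (unifOn R)) measurable_fst .of_discrete hcut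

end CayleyEdges

theorem cayley_edge_process_connectedness_general
    (R : Finset G) (hid : (1 : G) ∉ R) (hne : R.Nonempty)
    (hgen : Subgroup.closure (R : Set G) = ⊤) (C : ℝ) (t : ℕ)
    (ht : 2 * (C + 1) * Real.log (Fintype.card G) / gapHat G R ≤ (t : ℝ)) :
    (Measure.pi fun _ : Fin t => (unifOn (Finset.univ : Finset G)).prod (unifOn R))
        {ω | ¬ (SimpleGraph.fromRel fun a b =>
            ∃ s, (ω s).1 = a ∧ (ω s).1 * (ω s).2 = b).Connected} ≤
      ENNReal.ofReal (2 * (Fintype.card G : ℝ) ^ (-C)) := by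
  have := isProbabilityMeasure_unifOn (univ_nonempty (α := G))
  have := isProbabilityMeasure_unifOn hne
  have hgap := gapHat_pos hid hne hgen
  have hn : (0 : ℝ) < Fintype.card G := mod_cast Fintype.card_pos
  have hdecay :
      Fintype.card G * Real.exp (-(gapHat G R / 2 * t)) ≤ (Fintype.card G : ℝ) ^ (-C) := by
    rw [div_le_iff₀ hgap] at ht
    nth_rw 1 [← Real.exp_log hn]
    rw [Real.rpow_def_of_pos hn, ← Real.exp_add, Real.exp_le_exp]
    linarith
  rw [← ofReal_measureReal]
  gcongr
  exact (measureReal_not_connected_cayley_le hid hne t).trans (by gcongr)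

/-- Connectedness time for the Cayley-edge random graph process: with `(g_s, r_s)` i.i.d.
uniform on `G × R`, the graph with edges `{g_s, g_s r_s}` for `s ≤ t` is connected,
except with probability at most `2 n^{-C}`, whenever `t > 8 (C + 3) log n / γ̂`. -/
theorem cayley_edge_process_connectedness
    (R : Finset G) (hsym : ∀ r ∈ R, r⁻¹ ∈ R) (hid : (1 : G) ∉ R) (hne : R.Nonempty)
    (hgen : Subgroup.closure (R : Set G) = ⊤)
    (C : ℝ) (hC : 0 < C)
    (t : ℕ) (ht : 8 * (C + 3) * Real.log (Fintype.card G) / gapHat G R < (t : ℝ)) :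
    (Measure.pi fun _ : Fin t => (unifOn (Finset.univ : Finset G)).prod (unifOn R))
        {ω | ¬ (SimpleGraph.fromRel fun a b =>
            ∃ s, (ω s).1 = a ∧ (ω s).1 * (ω s).2 = b).Connected} ≤
      ENNReal.ofReal (2 * (Fintype.card G : ℝ) ^ (-C)) := by
  have hgap := gapHat_pos hid hne hgen
  have hlog := Real.log_natCast_nonneg (Fintype.card G)
  refine cayley_edge_process_connectedness_general G R hid hne hgen C t (le_trans ?_ ht.le)
  exact div_le_div_of_nonneg_right (mul_le_mul_of_nonneg_right (by linarith) hlog) hgap.le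

end
end

section
/- Let (X_t, Y_t) be two copies of the Gibbs sampler on M_n, started from arbitrary points X_0, Y_0 ∈ M_n and coupled under the proportional coupling. Then for every integer T ≥ 0, E[‖X_T − Y_T‖_2²] ≤ (1 − 2/(3n))^T · ‖X_0 − Y_0‖_2², where ‖X − Y‖_2² = ∑_{i=1}^n ∑_{j=1}^2 (X[i,j] − Y[i,j])². -/
/-!
Matrices with equal margins keep equal margins under the coupled step, and their difference is
determined by its first column `d`, which sums to `0`. An update of rows `i, j` redistributes
`s = x (i, 0) + x (j, 0)` by a map that is piecewise linear in `s`, with slopes `λ` and `1 - λ` in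
some order; hence it replaces `d i ^ 2 + d j ^ 2` by at most
`(λ ^ 2 + (1 - λ) ^ 2) * (d i + d j) ^ 2`. Integrating over `λ` gives the factor `2 / 3`, and
averaging over the pairs, where the cross terms `d i * d j` have negative total because
`∑ k, d k = 0`, contracts the squared distance by `1 - 2 / (3 * n)`. The Markov property iterates
this bound.
-/


open MeasureTheory

noncomputable section

/-- The set `M_n` of nonnegative `n × 2` matrices with row sums `2` and column sums `n`. -/
def MSet (n : ℕ) : Set (Fin n × Fin 2 → ℝ) :=
  {x | (∀ p, 0 ≤ x p) ∧ (∀ i : Fin n, x (i, 0) + x (i, 1) = 2) ∧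
    (∀ j : Fin 2, ∑ i : Fin n, x (i, j) = n)}

/-- The uniform (normalized `(n-1)`-dimensional Hausdorff) measure on `M_n`. -/
def UM (n : ℕ) : Measure (Fin n × Fin 2 → ℝ) :=
  (μH[(n : ℝ) - 1] (MSet n))⁻¹ • (μH[(n : ℝ) - 1]).restrict (MSet n)

/-- One step of the Gibbs sampler on `M_n`, updating the pair of rows `u.1 = (i, j)`
using the uniform variable `u.2 = λ`. -/
def stepM (n : ℕ) (x : Fin n × Fin 2 → ℝ) (u : (Fin n × Fin n) × ℝ) :
    Fin n × Fin 2 → ℝ := fun p =>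
  let i := u.1.1
  let j := u.1.2
  let l := u.2
  let d := 2 - x (i, 0) - x (j, 0)
  if p = (i, 0) then (if 0 ≤ d then l * (2 - d) else 2 * l - (1 - l) * d)
  else if p = (j, 0) then (if 0 ≤ d then (1 - l) * (2 - d) else 2 * (1 - l) - l * d)
  else if p = (i, 1) then (if 0 ≤ d then 2 * (1 - l) + l * d else (1 - l) * (2 + d))
  else if p = (j, 1) then (if 0 ≤ d then 2 * l + (1 - l) * d else l * (2 + d))
  else x p

/-- The set of ordered pairs `(i, j)` with `i < j`. -/
def pairsF (n : ℕ) : Finset (Fin n × Fin n) := Finset.univ.filter fun p => p.1 < p.2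

/-- Law of the random update datum: `(i, j)` uniform among pairs `i < j`, and
`λ` uniform on `[0,1]`. -/
def driveM (n : ℕ) : Measure ((Fin n × Fin n) × ℝ) :=
  (unifOn (pairsF n)).prod ((volume : Measure ℝ).restrict (Set.Icc 0 1))

/-- Law of the Gibbs sampler on `M_n` after `T` steps started at `x`. -/
def lawM (n : ℕ) (x : Fin n × Fin 2 → ℝ) (T : ℕ) : Measure (Fin n × Fin 2 → ℝ) :=
  Measure.map (fun ω : Fin T → (Fin n × Fin n) × ℝ => (List.ofFn ω).foldl (stepM n) x)
    (Measure.pi fun _ => driveM n)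

/-- Law of the `(T+1)`-step path of the Gibbs sampler on `M_n` with initial distribution `μ`. -/
def pathM (n T : ℕ) (μ : Measure (Fin n × Fin 2 → ℝ)) :
    Measure (Fin (T + 1) → Fin n × Fin 2 → ℝ) :=
  Measure.map (fun p : (Fin n × Fin 2 → ℝ) × (Fin T → (Fin n × Fin n) × ℝ) =>
      fun s : Fin (T + 1) => ((List.ofFn p.2).take s).foldl (stepM n) p.1)
    (μ.prod (Measure.pi fun _ => driveM n))

section FiniteSums

theorem two_nsmul_sum_pairsF_add_sum_diag {M : Type*} [AddCommMonoid M] {n : ℕ}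
    (f : Fin n → Fin n → M) (hf : ∀ i j, f i j = f j i) :
    2 • ∑ p ∈ pairsF n, f p.1 p.2 + ∑ i, f i i = ∑ i, ∑ j, f i j := by
  have sum_lt : ∑ p ∈ pairsF n, f p.1 p.2 = ∑ i, ∑ j, if i < j then f i j else 0 := by
    rw [pairsF, Finset.sum_filter, Fintype.sum_prod_type]
  have sum_gt : ∑ p ∈ pairsF n, f p.1 p.2 = ∑ i, ∑ j, if j < i then f i j else 0 := by
    rw [sum_lt, Finset.sum_comm]
    simp only [hf]
  have sum_diag : ∑ i, f i i = ∑ i, ∑ j, if i = j then f i j else 0 := by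
    simp only [Finset.sum_ite_eq, Finset.mem_univ, if_true]
  rw [two_nsmul]
  nth_rewrite 1 [sum_lt]
  rw [sum_gt, sum_diag]
  simp only [← Finset.sum_add_distrib]
  refine Finset.sum_congr rfl fun i _ => Finset.sum_congr rfl fun j _ => ?_
  rcases lt_trichotomy i j with h | h | h
  · simp [h, h.not_gt, h.ne]
  · simp [h]
  · simp [h, h.not_gt, h.ne']

variable {K : Type*} [Field K] [CharZero K] {n : ℕ}

theorem cast_card_pairsF : ((pairsF n).card : K) = n * (n - 1) / 2 := by
  have h := two_nsmul_sum_pairsF_add_sum_diag (n := n) (fun _ _ => (1 : K)) fun _ _ => rfl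
  simp only [Finset.sum_const, Finset.card_univ, Fintype.card_fin, nsmul_eq_mul, mul_one,
    Nat.cast_ofNat] at h
  linear_combination h / 2

theorem sum_pairsF_sq_add_sq (d : Fin n → K) :
    ∑ p ∈ pairsF n, (d p.1 ^ 2 + d p.2 ^ 2) = (n - 1) * ∑ k, d k ^ 2 := by
  have h := two_nsmul_sum_pairsF_add_sum_diag (fun i j => d i ^ 2 + d j ^ 2)
    fun _ _ => add_comm _ _
  simp only [Finset.sum_add_distrib, Finset.sum_const, Finset.card_univ, Fintype.card_fin,
    nsmul_eq_mul, ← Finset.mul_sum, Nat.cast_ofNat] at h ⊢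
  linear_combination h / 2

theorem sum_pairsF_add_sq (d : Fin n → K) :
    ∑ p ∈ pairsF n, (d p.1 + d p.2) ^ 2 = (n - 2) * ∑ k, d k ^ 2 + (∑ k, d k) ^ 2 := by
  have cross := two_nsmul_sum_pairsF_add_sum_diag (fun i j => d i * d j) fun _ _ => mul_comm _ _
  rw [← Finset.sum_mul_sum, nsmul_eq_mul, Nat.cast_ofNat] at cross
  have squares := sum_pairsF_sq_add_sq d
  have expand : ∑ p ∈ pairsF n, (d p.1 + d p.2) ^ 2 =
      ∑ p ∈ pairsF n, (d p.1 ^ 2 + d p.2 ^ 2) + 2 * ∑ p ∈ pairsF n, d p.1 * d p.2 := by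
    rw [Finset.mul_sum, ← Finset.sum_add_distrib]
    exact Finset.sum_congr rfl fun _ _ => by ring
  simp only [← sq] at cross
  linear_combination expand + squares + cross

theorem sum_sub_sum_eq_of_eq_off_pair {ι G : Type*} [Fintype ι] [AddCommGroup G] {f g : ι → G}
    {i j : ι} (hij : i ≠ j) (h : ∀ k, k ≠ i → k ≠ j → f k = g k) :
    ∑ k, f k - ∑ k, g k = (f i - g i) + (f j - g j) := by
  rw [← Finset.sum_sub_distrib]
  exact Fintype.sum_eq_add i j hij fun k hk => sub_eq_zero.2 (h k hk.1 hk.2)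

end FiniteSums

section RandomIteration

variable {α : Type*} [MeasurableSpace α]

theorem lintegral_pi_fin_succ_le (ν : Measure α) [SigmaFinite ν] {T : ℕ}
    (F : (Fin (T + 1) → α) → ENNReal) :
    ∫⁻ ω, F ω ∂Measure.pi (fun _ => ν) ≤
      ∫⁻ u, ∫⁻ ω : Fin T → α, F (Fin.cons u ω) ∂Measure.pi (fun _ => ν) ∂ν := by
  have split := (measurePreserving_piFinSuccAbove (fun _ : Fin (T + 1) => ν) 0).symm
  rw [split.lintegral_map_equiv F]
  refine (lintegral_prod_le _).trans_eq ?_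
  simp only [MeasurableEquiv.piFinSuccAbove_symm_apply, Fin.insertNthEquiv_zero]
  rfl

theorem lintegral_foldl_le_pow_mul {S : Type*} {ν : Measure α} [SigmaFinite ν] {f : S → α → S}
    {P : S → Prop} {V : S → ENNReal} {c : ENNReal} (hc : c ≠ ⊤)
    (hP : ∀ s, P s → ∀ᵐ u ∂ν, P (f s u)) (hV : ∀ s, P s → ∫⁻ u, V (f s u) ∂ν ≤ c * V s)
    (T : ℕ) {s : S} (hs : P s) :
    ∫⁻ ω : Fin T → α, V ((List.ofFn ω).foldl f s) ∂Measure.pi (fun _ => ν) ≤ c ^ T * V s := by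
  induction T generalizing s with
  | zero => simp
  | succ T ih =>
    calc ∫⁻ ω : Fin (T + 1) → α, V ((List.ofFn ω).foldl f s) ∂Measure.pi (fun _ => ν)
        ≤ ∫⁻ u, ∫⁻ ω : Fin T → α, V ((List.ofFn ω).foldl f (f s u))
            ∂Measure.pi (fun _ => ν) ∂ν := by
          simpa only [List.ofFn_cons, List.foldl_cons] using
            lintegral_pi_fin_succ_le ν fun ω => V ((List.ofFn ω).foldl f s)
      _ ≤ ∫⁻ u, c ^ T * V (f s u) ∂ν := lintegral_mono_ae ((hP s hs).mono fun _ hu => ih hu)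
      _ = c ^ T * ∫⁻ u, V (f s u) ∂ν := lintegral_const_mul' _ _ (ENNReal.pow_ne_top hc)
      _ ≤ c ^ T * (c * V s) := by gcongr; exact hV s hs
      _ = c ^ (T + 1) * V s := by ring

end RandomIteration

section UpdateLaw

instance isFiniteMeasure_unifOn {α : Type*} [MeasurableSpace α] (s : Finset α) :
    IsFiniteMeasure (unifOn s) := by
  rcases s.eq_empty_or_nonempty with rfl | hs
  · rw [unifOn, Finset.sum_empty, smul_zero]
    infer_instance
  · exact Measure.smul_finite _ (ENNReal.inv_ne_top.2 (Nat.cast_ne_zero.2 hs.card_ne_zero))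

instance isFiniteMeasure_driveM (n : ℕ) : IsFiniteMeasure (driveM n) := by
  unfold driveM
  infer_instance

theorem ae_mem_unifOn {α : Type*} [MeasurableSpace α] [MeasurableSingletonClass α]
    (s : Finset α) : ∀ᵐ a ∂unifOn s, a ∈ s := by
  refine Measure.ae_smul_measure (ae_finsetSum_measure_iff.2 fun a ha => ?_) _
  exact (ae_dirac_iff s.measurableSet).2 ha

theorem lintegral_unifOn {α : Type*} [MeasurableSpace α] [MeasurableSingletonClass α]
    (s : Finset α) (F : α → ENNReal) :
    ∫⁻ a, F a ∂unifOn s = (s.card : ENNReal)⁻¹ * ∑ a ∈ s, F a := by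
  simp only [unifOn, lintegral_smul_measure, lintegral_finsetSum_measure, lintegral_dirac,
    smul_eq_mul]

theorem ae_lt_driveM (n : ℕ) : ∀ᵐ u ∂driveM n, u.1.1 < u.1.2 :=
  (Measure.quasiMeasurePreserving_fst.ae (ae_mem_unifOn (pairsF n))).mono fun _ hu =>
    (Finset.mem_filter.1 hu).2

theorem lintegral_driveM_le (n : ℕ) (F : (Fin n × Fin n) × ℝ → ENNReal) :
    ∫⁻ u, F u ∂driveM n ≤
      ((pairsF n).card : ENNReal)⁻¹ * ∑ p ∈ pairsF n, ∫⁻ l in Set.Icc (0 : ℝ) 1, F (p, l) :=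
  (lintegral_prod_le _).trans_eq (lintegral_unifOn _ _)

theorem integral_sq_add_one_sub_sq : ∫ l in (0 : ℝ)..1, (l ^ 2 + (1 - l) ^ 2) = 2 / 3 := by
  rw [intervalIntegral.integral_add, intervalIntegral.integral_comp_sub_left (fun l => l ^ 2)]
  · norm_num
  all_goals exact Continuous.intervalIntegrable (by fun_prop) _ _

theorem lintegral_add_sq_add_one_sub_sq_mul {A B : ℝ} (hA : 0 ≤ A) (hB : 0 ≤ B) :
    ∫⁻ l in Set.Icc (0 : ℝ) 1, ENNReal.ofReal (A + (l ^ 2 + (1 - l) ^ 2) * B) =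
      ENNReal.ofReal (A + 2 / 3 * B) := by
  rw [← ofReal_integral_eq_lintegral_ofReal]
  · rw [integral_Icc_eq_integral_Ioc, ← intervalIntegral.integral_of_le zero_le_one,
      intervalIntegral.integral_add, intervalIntegral.integral_mul_const,
      integral_sq_add_one_sub_sq, intervalIntegral.integral_const, sub_zero, one_smul]
    all_goals exact Continuous.intervalIntegrable (by fun_prop) _ _
  · exact Continuous.integrableOn_Icc (by fun_prop)
  · exact Filter.Eventually.of_forall fun l => by positivity

end UpdateLaw

section GibbsShare

/-- The first-column entry that row `i` receives in a Gibbs update of rows `i, j` with uniform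
variable `l`, when the two rows have first-column total `s`; row `j` receives
`gibbsShare (1 - l) s`. The two cases of `stepM` correspond to `s ≤ 2` and `2 < s`. -/
def gibbsShare (l s : ℝ) : ℝ :=
  if s ≤ 2 then l * s else 2 * l + (1 - l) * (s - 2)

theorem gibbsShare_add_gibbsShare_one_sub (l s : ℝ) :
    gibbsShare l s + gibbsShare (1 - l) s = s := by
  unfold gibbsShare
  split_ifs <;> ring

theorem gibbsShare_sub_sq_add_le (l s t : ℝ) :
    (gibbsShare l s - gibbsShare l t) ^ 2 + (gibbsShare (1 - l) s - gibbsShare (1 - l) t) ^ 2 ≤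
      (l ^ 2 + (1 - l) ^ 2) * (s - t) ^ 2 := by
  wlog hst : t ≤ s generalizing s t
  · rw [sub_sq_comm (gibbsShare l s), sub_sq_comm (gibbsShare (1 - l) s), sub_sq_comm s]
    exact this t s (le_of_not_ge hst)
  unfold gibbsShare
  split_ifs with hs ht ht
  · exact le_of_eq (by ring)
  · exact absurd (hst.trans hs) ht
  · -- With `b = 2 - t` and `a = s - 2`, the defect of the bound is `2 a b (1 - 2 l) ^ 2`.
    have defect_nonneg : 0 ≤ (s - 2) * (2 - t) * (1 - 2 * l) ^ 2 :=
      mul_nonneg (mul_nonneg (by linarith) (by linarith)) (sq_nonneg _)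
    linear_combination 2 * defect_nonneg
  · exact le_of_eq (by ring)

end GibbsShare

section GibbsStep

variable {n : ℕ} (x : Fin n × Fin 2 → ℝ) {i j k : Fin n} (l : ℝ)

theorem stepM_left_zero :
    stepM n x ((i, j), l) (i, 0) = gibbsShare l (x (i, 0) + x (j, 0)) := by
  simp only [stepM, gibbsShare, if_true, sub_sub, sub_nonneg]
  split_ifs <;> ring

theorem stepM_right_zero (hij : i ≠ j) :
    stepM n x ((i, j), l) (j, 0) = gibbsShare (1 - l) (x (i, 0) + x (j, 0)) := by
  simp only [stepM, gibbsShare, Prod.mk.injEq, hij.symm, false_and, and_true, if_true, if_false,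
    sub_sub, sub_nonneg]
  split_ifs <;> ring

theorem stepM_left_row :
    stepM n x ((i, j), l) (i, 0) + stepM n x ((i, j), l) (i, 1) = 2 := by
  simp only [stepM, Prod.mk.injEq, and_false, if_true, if_false, one_ne_zero]
  split_ifs <;> ring

theorem stepM_right_row :
    stepM n x ((i, j), l) (j, 0) + stepM n x ((i, j), l) (j, 1) = 2 := by
  simp only [stepM, Prod.mk.injEq, and_true, and_false, if_true, if_false, one_ne_zero]
  split_ifs <;> ring

theorem stepM_of_ne (hi : k ≠ i) (hj : k ≠ j) (c : Fin 2) :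
    stepM n x ((i, j), l) (k, c) = x (k, c) := by
  simp only [stepM, Prod.mk.injEq, hi, hj, false_and, if_false]

theorem sum_stepM_zero (hij : i ≠ j) :
    ∑ k, stepM n x ((i, j), l) (k, 0) = ∑ k, x (k, 0) := by
  have change := sum_sub_sum_eq_of_eq_off_pair hij fun k hi hj => stepM_of_ne x l hi hj 0
  rw [stepM_left_zero, stepM_right_zero x l hij] at change
  linear_combination change + gibbsShare_add_gibbsShare_one_sub l (x (i, 0) + x (j, 0))

end GibbsStep

/-- Two `n × 2` matrices have the same row sums and the same column sums. This is the invariant of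
the coupling. Equality of the second column sums follows from the two fields. -/
structure SameMargins {n : ℕ} (x y : Fin n × Fin 2 → ℝ) : Prop where
  row : ∀ i, x (i, 0) + x (i, 1) = y (i, 0) + y (i, 1)
  col_zero : ∑ i, x (i, 0) = ∑ i, y (i, 0)

/-- The squared Euclidean distance `‖x - y‖₂²`. A function type carries the sup norm in Mathlib,
so the sum is written out. -/
def sqDist {ι : Type*} [Fintype ι] (x y : ι → ℝ) : ℝ := ∑ q, (x q - y q) ^ 2

namespace SameMargins

variable {n : ℕ} {x y : Fin n × Fin 2 → ℝ} {i j : Fin n}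

theorem of_mem_MSet (hx : x ∈ MSet n) (hy : y ∈ MSet n) : SameMargins x y where
  row i := (hx.2.1 i).trans (hy.2.1 i).symm
  col_zero := (hx.2.2 0).trans (hy.2.2 0).symm

theorem step (h : SameMargins x y) (hij : i ≠ j) (l : ℝ) :
    SameMargins (stepM n x ((i, j), l)) (stepM n y ((i, j), l)) where
  row k := by
    by_cases hi : k = i
    · rw [hi, stepM_left_row x l, stepM_left_row y l]
    by_cases hj : k = j
    · rw [hj, stepM_right_row x l, stepM_right_row y l]
    simp only [stepM_of_ne _ l hi hj, h.row k]
  col_zero := by rw [sum_stepM_zero x l hij, sum_stepM_zero y l hij, h.col_zero]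

theorem sqDist_eq (h : SameMargins x y) :
    sqDist x y = 2 * ∑ k, (x (k, 0) - y (k, 0)) ^ 2 := by
  rw [sqDist, Fintype.sum_prod_type, Finset.mul_sum]
  refine Finset.sum_congr rfl fun k _ => ?_
  have opposite : x (k, 1) - y (k, 1) = -(x (k, 0) - y (k, 0)) := by
    linear_combination h.row k
  rw [Fin.sum_univ_two, opposite]
  ring

theorem sqDist_stepM_le (h : SameMargins x y) (hij : i ≠ j) (l : ℝ) :
    sqDist (stepM n x ((i, j), l)) (stepM n y ((i, j), l)) ≤
      sqDist x y - 2 * ((x (i, 0) - y (i, 0)) ^ 2 + (x (j, 0) - y (j, 0)) ^ 2) +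
        (l ^ 2 + (1 - l) ^ 2) *
          (2 * ((x (i, 0) - y (i, 0)) + (x (j, 0) - y (j, 0))) ^ 2) := by
  have change := sum_sub_sum_eq_of_eq_off_pair
    (f := fun k => (stepM n x ((i, j), l) (k, 0) - stepM n y ((i, j), l) (k, 0)) ^ 2)
    (g := fun k => (x (k, 0) - y (k, 0)) ^ 2) hij
    fun k hi hj => by rw [stepM_of_ne x l hi hj, stepM_of_ne y l hi hj]
  simp only [stepM_left_zero, stepM_right_zero _ _ hij] at change
  rw [(h.step hij l).sqDist_eq, h.sqDist_eq]
  linear_combination 2 * change +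
    2 * gibbsShare_sub_sq_add_le l (x (i, 0) + x (j, 0)) (y (i, 0) + y (j, 0))

theorem two_mul_sq_add_sq_le_sqDist (h : SameMargins x y) (hij : i ≠ j) :
    2 * ((x (i, 0) - y (i, 0)) ^ 2 + (x (j, 0) - y (j, 0)) ^ 2) ≤ sqDist x y := by
  rw [h.sqDist_eq]
  gcongr
  exact Finset.add_le_sum (f := fun k => (x (k, 0) - y (k, 0)) ^ 2)
    (fun _ _ => sq_nonneg _) (Finset.mem_univ i) (Finset.mem_univ j) hij

theorem lintegral_sqDist_stepM_le (h : SameMargins x y) (hij : i ≠ j) :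
    ∫⁻ l in Set.Icc (0 : ℝ) 1,
        ENNReal.ofReal (sqDist (stepM n x ((i, j), l)) (stepM n y ((i, j), l))) ≤
      ENNReal.ofReal
        (sqDist x y - 2 * ((x (i, 0) - y (i, 0)) ^ 2 + (x (j, 0) - y (j, 0)) ^ 2) +
          2 / 3 * (2 * ((x (i, 0) - y (i, 0)) + (x (j, 0) - y (j, 0))) ^ 2)) := by
  rw [← lintegral_add_sq_add_one_sub_sq_mul (sub_nonneg.2 (h.two_mul_sq_add_sq_le_sqDist hij))
    (by positivity)]
  exact lintegral_mono fun l => ENNReal.ofReal_le_ofReal (h.sqDist_stepM_le hij l)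

theorem sum_pairsF_step_bound_le (h : SameMargins x y) (hn : n ≠ 0) :
    ∑ p ∈ pairsF n,
        (sqDist x y - 2 * ((x (p.1, 0) - y (p.1, 0)) ^ 2 + (x (p.2, 0) - y (p.2, 0)) ^ 2) +
          2 / 3 * (2 * ((x (p.1, 0) - y (p.1, 0)) + (x (p.2, 0) - y (p.2, 0))) ^ 2)) ≤
      (pairsF n).card * ((1 - 2 / (3 * n)) * sqDist x y) := by
  have n_ne_zero : (n : ℝ) ≠ 0 := Nat.cast_ne_zero.2 hn
  have sum_diff : ∑ k, (x (k, 0) - y (k, 0)) = 0 := by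
    rw [Finset.sum_sub_distrib, h.col_zero, sub_self]
  have sum_sq_nonneg : 0 ≤ ∑ k, (x (k, 0) - y (k, 0)) ^ 2 :=
    Finset.sum_nonneg fun _ _ => sq_nonneg _
  rw [Finset.sum_add_distrib, Finset.sum_sub_distrib, ← Finset.mul_sum, ← Finset.mul_sum,
    ← Finset.mul_sum, sum_pairsF_sq_add_sq fun k => x (k, 0) - y (k, 0),
    sum_pairsF_add_sq fun k => x (k, 0) - y (k, 0), sum_diff, Finset.sum_const, nsmul_eq_mul,
    cast_card_pairsF, h.sqDist_eq]
  field_simp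
  linear_combination 4 * sum_sq_nonneg

theorem lintegral_driveM_sqDist_stepM_le (h : SameMargins x y) (hn : 2 ≤ n) :
    ∫⁻ u, ENNReal.ofReal (sqDist (stepM n x u) (stepM n y u)) ∂driveM n ≤
      ENNReal.ofReal ((1 - 2 / (3 * n)) * sqDist x y) := by
  have ne_of_mem {p : Fin n × Fin n} (hp : p ∈ pairsF n) : p.1 ≠ p.2 :=
    (Finset.mem_filter.1 hp).2.ne
  have card_ne_zero : ((pairsF n).card : ENNReal) ≠ 0 := by
    rw [Nat.cast_ne_zero]
    exact Finset.card_ne_zero_of_mem (a := (⟨0, by omega⟩, ⟨1, by omega⟩)) (by simp [pairsF])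
  refine (lintegral_driveM_le n _).trans ?_
  rw [ENNReal.inv_mul_le_iff card_ne_zero (ENNReal.natCast_ne_top _)]
  refine (Finset.sum_le_sum fun p hp => h.lintegral_sqDist_stepM_le (ne_of_mem hp)).trans ?_
  rw [← ENNReal.ofReal_sum_of_nonneg, ← ENNReal.ofReal_natCast,
    ← ENNReal.ofReal_mul (Nat.cast_nonneg _)]
  · exact ENNReal.ofReal_le_ofReal (h.sum_pairsF_step_bound_le (by omega))
  · exact fun p hp => add_nonneg
      (sub_nonneg.2 (h.two_mul_sq_add_sq_le_sqDist (ne_of_mem hp))) (by positivity)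

end SameMargins

theorem narrow_matrices_L2_contraction_general {n : ℕ} (hn : 2 ≤ n)
    {x y : Fin n × Fin 2 → ℝ} (h : SameMargins x y) (T : ℕ) :
    ∫⁻ ω : Fin T → (Fin n × Fin n) × ℝ,
        ENNReal.ofReal (sqDist ((List.ofFn ω).foldl (stepM n) x) ((List.ofFn ω).foldl (stepM n) y))
        ∂(Measure.pi fun _ => driveM n) ≤
      ENNReal.ofReal ((1 - 2 / (3 * n)) ^ T * sqDist x y) := by
  have rate_nonneg : (0 : ℝ) ≤ 1 - 2 / (3 * n) := by
    have : (2 : ℝ) ≤ n := by exact_mod_cast hn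
    rw [sub_nonneg, div_le_one (by positivity)]
    linarith
  have iterate := lintegral_foldl_le_pow_mul (ν := driveM n)
    (f := fun z u => (stepM n z.1 u, stepM n z.2 u)) (P := fun z => SameMargins z.1 z.2)
    (V := fun z => ENNReal.ofReal (sqDist z.1 z.2)) ENNReal.ofReal_ne_top
    (fun z hz => (ae_lt_driveM n).mono fun u hu => hz.step hu.ne u.2)
    (fun z hz => (hz.lintegral_driveM_sqDist_stepM_le hn).trans_eq
      (ENNReal.ofReal_mul rate_nonneg)) T (s := (x, y)) h
  rw [ENNReal.ofReal_mul (pow_nonneg rate_nonneg T), ENNReal.ofReal_pow rate_nonneg]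
  simpa only [List.foldl_hom₂ _ Prod.mk (stepM n) (stepM n)
    (fun z u => (stepM n z.1 u, stepM n z.2 u)) x y fun _ _ _ => rfl] using iterate

/-- `L²` contraction for the proportionally coupled Gibbs samplers on narrow matrices:
`E[‖X_T - Y_T‖₂²] ≤ (1 - 2/(3n))^T ‖X₀ - Y₀‖₂²`. -/
theorem narrow_matrices_L2_contraction
    (n : ℕ) (hn : 2 ≤ n)
    (x y : Fin n × Fin 2 → ℝ) (hx : x ∈ MSet n) (hy : y ∈ MSet n) (T : ℕ) :
    ∫⁻ ω : Fin T → (Fin n × Fin n) × ℝ,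
        ENNReal.ofReal (∑ q : Fin n × Fin 2,
          ((List.ofFn ω).foldl (stepM n) x q - (List.ofFn ω).foldl (stepM n) y q) ^ 2)
        ∂(Measure.pi fun _ => driveM n) ≤
      ENNReal.ofReal ((1 - 2 / (3 * n)) ^ T * ∑ q : Fin n × Fin 2, (x q - y q) ^ 2) := by
  exact narrow_matrices_L2_contraction_general hn (.of_mem_MSet hx hy) T

end
end
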